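/- arXiv:2410.09602 — 2 statements merged into one kernel-verified Lean document; each statement's English description precedes it below -/
import Mathlib

section
/- Let p be a prime, K a field of characteristic p, b ∈ ℕ with b ≤ p−1, and f ∈ K[X]. Then the (b+1)-st formal derivative of f is zero if and only if every exponent e occurring in f with nonzero coefficient satisfies e mod p ≤ b. -/
open Polynomial

lemma aux_dvd (p : ℕ) (hp : p.Prime) (b e : ℕ) :
    p ∣ e.descFactorial (b + 1) ↔ e % p ≤ b := by
  rw [Nat.descFactorial_eq_prod_range, hp.prime.dvd_finsetProd_iff]
  constructor
  · rintro ⟨i, hi, c, hc⟩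
    rw [Finset.mem_range] at hi
    rcases le_total e i with h | h
    · exact (Nat.mod_le e p).trans (by omega)
    · have he : e = i + p * c := by omega
      rw [he, Nat.add_mul_mod_self_left]
      exact (Nat.mod_le i p).trans (by omega)
  · intro h
    exact ⟨e % p, Finset.mem_range.2 (by omega), Nat.dvd_sub_mod e⟩

/-- Let `p` be a prime, `K` a field of characteristic `p`, `b ≤ p−1` and `f ∈ K[X]`.
Then the `(b+1)`-st formal derivative of `f` vanishes if and only if every exponent `e`
occurring in `f` with nonzero coefficient satisfies `e % p ≤ b`. -/
theorem stmt_8 (p : ℕ) (hp : p.Prime) (K : Type*) [Field K] [CharP K p]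
    (b : ℕ) (hb : b ≤ p - 1) (f : K[X]) :
    derivative^[b + 1] f = 0 ↔ ∀ e ∈ f.support, e % p ≤ b := by
  constructor
  · intro h e he
    rcases Nat.lt_or_ge e (b + 1) with hlt | hge
    · exact (Nat.mod_le e p).trans (by omega)
    · have h1 := congrArg (fun g => coeff g (e - (b + 1))) h
      simp only [coeff_iterate_derivative, coeff_zero, Nat.sub_add_cancel hge,
        nsmul_eq_mul, mul_eq_zero] at h1
      rcases h1 with h1 | h1
      · exact (aux_dvd p hp b e).1 ((CharP.cast_eq_zero_iff K p _).1 h1)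
      · exact absurd h1 (mem_support_iff.1 he)
  · intro h
    ext m
    rw [coeff_iterate_derivative, coeff_zero, nsmul_eq_mul, mul_eq_zero]
    by_cases hm : f.coeff (m + (b + 1)) = 0
    · exact Or.inr hm
    · exact Or.inl ((CharP.cast_eq_zero_iff K p _).2
        ((aux_dvd p hp b _).2 (h _ (mem_support_iff.2 hm))))
end

section
/- Let p be a prime, S a commutative ring of characteristic p, and R = S[T, T₁₁, T₁₂, T₂₂] the polynomial ring in four variables. For ij ∈ {11, 12, 22} let D_ij : R → R be the S-linear operator D_ij(f) = (T_ij + 1)·∂f/∂T_ij. Define Θ₃(f) = T^{2p}·D₁₁(f) − T^p·D₁₂(f) + D₂₂(f) and, for N ∈ ℤ, θ₄⁽ᴺ⁾(f) = (T − T^p)·∂f/∂T + N·f. Then for every N ∈ ℤ, Θ₃ ∘ θ₄⁽ᴺ⁾ = θ₄⁽ᴺ⁻²ᵖ⁾ ∘ Θ₃ as S-linear endomorphisms of R. -/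
open MvPolynomial

/-- The operator `D_ij : f ↦ (T_ij + 1)·∂f/∂T_ij` on `S[T, T₁₁, T₁₂, T₂₂]`,
with the variables indexed by `Fin 4` as `0 ↦ T`, `1 ↦ T₁₁`, `2 ↦ T₁₂`, `3 ↦ T₂₂`. -/
noncomputable def Dij {S : Type*} [CommRing S] (i : Fin 4) (f : MvPolynomial (Fin 4) S) :
    MvPolynomial (Fin 4) S :=
  (X i + 1) * pderiv i f

/-- `Θ₁ f = T²·D₁₁ f − T·D₁₂ f + D₂₂ f`. -/
noncomputable def Theta1 {S : Type*} [CommRing S] (f : MvPolynomial (Fin 4) S) :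
    MvPolynomial (Fin 4) S :=
  X 0 ^ 2 * Dij 1 f - X 0 * Dij 2 f + Dij 3 f

/-- `Θ₂ f = 2T^{p+1}·D₁₁ f − (T + T^p)·D₁₂ f + 2·D₂₂ f`. -/
noncomputable def Theta2 {S : Type*} [CommRing S] (p : ℕ) (f : MvPolynomial (Fin 4) S) :
    MvPolynomial (Fin 4) S :=
  2 * X 0 ^ (p + 1) * Dij 1 f - (X 0 + X 0 ^ p) * Dij 2 f + 2 * Dij 3 f

/-- `Θ₃ f = T^{2p}·D₁₁ f − T^p·D₁₂ f + D₂₂ f`. -/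
noncomputable def Theta3 {S : Type*} [CommRing S] (p : ℕ) (f : MvPolynomial (Fin 4) S) :
    MvPolynomial (Fin 4) S :=
  X 0 ^ (2 * p) * Dij 1 f - X 0 ^ p * Dij 2 f + Dij 3 f

/-- `θ₄⁽ᴺ⁾ f = (T − T^p)·∂f/∂T + N·f`. -/
noncomputable def theta4 {S : Type*} [CommRing S] (p : ℕ) (N : ℤ) (f : MvPolynomial (Fin 4) S) :
    MvPolynomial (Fin 4) S :=
  (X 0 - X 0 ^ p) * pderiv 0 f + (N : MvPolynomial (Fin 4) S) * f

theorem pderiv_comm_aux {S : Type*} [CommRing S] (i j : Fin 4) (f : MvPolynomial (Fin 4) S) :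
    pderiv i (pderiv j f) = pderiv j (pderiv i f) := by
  have h : ⁅pderiv (R := S) i, pderiv (R := S) j⁆ = 0 := by
    apply MvPolynomial.derivation_ext
    intro k
    rw [Derivation.commutator_apply]
    simp only [pderiv_X, Pi.single_apply]
    split_ifs <;> simp
  have h2 := congrArg (fun D => D f) h
  simpa [Derivation.commutator_apply, sub_eq_zero] using h2

/-- Let `p` be a prime and `S` a commutative ring of characteristic `p`.  Then for every
`N : ℤ`, `Θ₃ ∘ θ₄⁽ᴺ⁾ = θ₄⁽ᴺ⁻²ᵖ⁾ ∘ Θ₃` on `S[T, T₁₁, T₁₂, T₂₂]`. -/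
theorem stmt_13 (p : ℕ) (hp : p.Prime) (S : Type*) [CommRing S] [CharP S p]
    (N : ℤ) (f : MvPolynomial (Fin 4) S) :
    Theta3 p (theta4 p N f) = theta4 p (N - 2 * (p : ℤ)) (Theta3 p f) := by
  have hp0 : (p : MvPolynomial (Fin 4) S) = 0 := CharP.cast_eq_zero _ p
  have hN : ∀ (i : Fin 4) (M : ℤ), pderiv i (M : MvPolynomial (Fin 4) S) = 0 :=
    fun i M => Derivation.map_intCast _ M
  have h1 : pderiv 1 (X 0 : MvPolynomial (Fin 4) S) = 0 := pderiv_X_of_ne (by decide)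
  have h2 : pderiv 2 (X 0 : MvPolynomial (Fin 4) S) = 0 := pderiv_X_of_ne (by decide)
  have h3 : pderiv 3 (X 0 : MvPolynomial (Fin 4) S) = 0 := pderiv_X_of_ne (by decide)
  have k1 : pderiv 0 (X 1 : MvPolynomial (Fin 4) S) = 0 := pderiv_X_of_ne (by decide)
  have k2 : pderiv 0 (X 2 : MvPolynomial (Fin 4) S) = 0 := pderiv_X_of_ne (by decide)
  have k3 : pderiv 0 (X 3 : MvPolynomial (Fin 4) S) = 0 := pderiv_X_of_ne (by decide)
  simp only [Theta3, theta4, Dij, map_add, map_sub, pderiv_mul, pderiv_pow, h1, h2, h3, k1, k2, k3,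
    hN, pderiv_one, hp0, Nat.cast_mul, Int.cast_sub, Int.cast_mul, Int.cast_natCast,
    pderiv_comm_aux 1 0, pderiv_comm_aux 2 0, pderiv_comm_aux 3 0]
  ring
end
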